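/- (Frobenius elliptic Cauchy determinant formula.) Let N ≥ 1 and let ξ, x₁,…,x_N, y₁,…,y_N ∈ ℂ be such that ξ ∉ Λ, x_i + y_j ∉ Λ for all i,j, and ξ + Σ_{i=1}^N (x_i + y_i) ∉ Λ. Then the N×N determinant of the matrix with entries Φ_ξ(x_i + y_j) equals [σ(ξ + Σ_{i=1}^N (x_i + y_i))/σ(ξ)] · [∏_{1≤i<j≤N} σ(x_i − x_j)·σ(y_i − y_j)] / [∏_{i=1}^N ∏_{j=1}^N σ(x_i + y_j)]. -/

import Mathlib

open scoped BigOperators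

noncomputable section

/-- A period lattice in `ℂ` spanned by two `ℝ`-independent periods. -/
structure EllLattice where
  ω₁ : ℂ
  ω₂ : ℂ
  indep : ∀ a b : ℝ, a • ω₁ + b • ω₂ = 0 → a = 0 ∧ b = 0

namespace EllLattice

/-- Membership in the lattice `Λ = ℤω₁ + ℤω₂`. -/
def mem (L : EllLattice) (z : ℂ) : Prop := ∃ m n : ℤ, z = m • L.ω₁ + n • L.ω₂

/-- The lattice point with integer coordinates `p = (m, n)`. -/
def per (L : EllLattice) (p : ℤ × ℤ) : ℂ := p.1 • L.ω₁ + p.2 • L.ω₂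

/-- The Weierstrass sigma function associated to the lattice, defined by its
Hadamard product over the nonzero lattice points. -/
def sigma (L : EllLattice) (z : ℂ) : ℂ :=
  z * ∏' p : {p : ℤ × ℤ // p ≠ 0},
      ((1 - z / L.per p.1) *
        Complex.exp (z / L.per p.1 + z ^ 2 / (2 * (L.per p.1) ^ 2)))

/-- The Weierstrass zeta function `ζ = σ′/σ`. -/
def zeta (L : EllLattice) (z : ℂ) : ℂ := deriv L.sigma z / L.sigma z

/-- The Weierstrass `℘`-function `℘ = −ζ′`. -/
def wp (L : EllLattice) (z : ℂ) : ℂ := - deriv L.zeta z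

/-- `Φ_ξ(κ) = σ(ξ+κ)/(σ(ξ)σ(κ))`. -/
def Phi (L : EllLattice) (ξ κ : ℂ) : ℂ := L.sigma (ξ + κ) / (L.sigma ξ * L.sigma κ)

/-- The Lamé function `Ψ_ξ(κ) = Φ_ξ(κ)·e^{−ζ(ξ)κ}`. -/
def Psi (L : EllLattice) (ξ κ : ℂ) : ℂ := L.Phi ξ κ * Complex.exp (-(L.zeta ξ) * κ)

/-- `η_δ(ξ) = ζ(ξ+δ) − ζ(ξ) − ζ(δ)`. -/
def eta (L : EllLattice) (δ ξ : ℂ) : ℂ := L.zeta (ξ + δ) - L.zeta ξ - L.zeta δ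

/-- `χ_{α,β}(ξ) = ζ(α) + ζ(β) + ζ(ξ) − ζ(ξ+α+β)`. -/
def chi (L : EllLattice) (α β ξ : ℂ) : ℂ :=
  L.zeta α + L.zeta β + L.zeta ξ - L.zeta (ξ + α + β)

end EllLattice

/-!
The second logarithmic derivative of the product for `σ` is the series of `-℘`, so `℘` being
elliptic makes `σ` quasi-periodic: `σ (z + l) = k exp (α z) σ z` for every period `l`. If `F` is
even, entire, vanishes at `0` and transforms like `σ²`, then `F / σ²` is elliptic without poles,
hence constant by Liouville's theorem. Applied to combinations of the functions
`z ↦ σ (z + b) σ (z - b)`, this gives the three-term relation of Weierstrass, which is equivalent to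
the `2 × 2` case of the determinant formula (Fay's identity).

By Fay's identity, the Schur complement of the entry `Φ_ξ (x₀ + y₀)` is, up to factors depending
only on the row or only on the column, the matrix of size one less with `ξ` replaced by
`ξ + x₀ + y₀`, and induction on the size applies whenever that entry is nonzero. Otherwise it is
nonzero at all other values near `ξ`, and the formula follows by continuity in `ξ`.
-/

open Filter Topology Set

theorem tendsto_deriv_logDeriv {ι : Type*} {p : Filter ι} [p.NeBot] {s : Set ℂ} {x : ℂ}
    {F : ι → ℂ → ℂ} {f : ℂ → ℂ} (hs : IsOpen s) (hx : x ∈ s)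
    (hF : TendstoLocallyUniformlyOn F f p s) (hd : ∀ᶠ n in p, DifferentiableOn ℂ (F n) s)
    (hfx : f x ≠ 0) :
    Tendsto (fun n => deriv (logDeriv (F n)) x) p (𝓝 (deriv (logDeriv f) x)) := by
  have deriv_logDeriv {g : ℂ → ℂ} (hg : DifferentiableOn ℂ g s) (hgx : g x ≠ 0) :
      deriv (logDeriv g) x = (deriv (deriv g) x * g x - deriv g x * deriv g x) / g x ^ 2 :=
    deriv_div ((hg.deriv hs).differentiableAt (hs.mem_nhds hx))
      (hg.differentiableAt (hs.mem_nhds hx)) hgx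
  have hF₁ := hF.deriv hd hs
  have hF₂ := hF₁.deriv (hd.mono fun n hn => hn.deriv hs) hs
  rw [deriv_logDeriv (hF.differentiableOn hd hs) hfx]
  refine ((((hF₂.tendsto_at hx).mul (hF.tendsto_at hx)).sub
    ((hF₁.tendsto_at hx).mul (hF₁.tendsto_at hx))).div ((hF.tendsto_at hx).pow 2)
      (pow_ne_zero 2 hfx)).congr' ?_
  filter_upwards [hd, (hF.tendsto_at hx).eventually_ne hfx] with n hn hnx
  exact (deriv_logDeriv hn hnx).symm

theorem hasSum_deriv_logDeriv_of_hasProdLocallyUniformlyOn {ι : Type*} {s : Set ℂ} {x : ℂ}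
    {f : ι → ℂ → ℂ} {g : ℂ → ℂ} (hs : IsOpen s) (hx : x ∈ s)
    (hfg : HasProdLocallyUniformlyOn f g s) (hd : ∀ i, DifferentiableOn ℂ (f i) s)
    (hf : ∀ i, f i x ≠ 0) (hg : g x ≠ 0) :
    HasSum (fun i => deriv (logDeriv (f i)) x) (deriv (logDeriv g) x) := by
  have hdx (i : ι) : ∀ᶠ z in 𝓝 x, DifferentiableAt ℂ (f i) z :=
    (hd i).eventually_differentiableAt (hs.mem_nhds hx)
  have hne (i : ι) : ∀ᶠ z in 𝓝 x, f i z ≠ 0 :=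
    ((hdx i).self_of_nhds.continuousAt).eventually_ne (hf i)
  have hsum (t : Finset ι) :
      logDeriv (∏ i ∈ t, f i ·) =ᶠ[𝓝 x] fun z => ∑ i ∈ t, logDeriv (f i) z := by
    filter_upwards [t.eventually_all.mpr fun i _ => hdx i, t.eventually_all.mpr fun i _ => hne i]
      with z hdz hnez using logDeriv_prod hnez hdz
  have hlog (i : ι) : DifferentiableAt ℂ (logDeriv (f i)) x :=
    (((hd i).deriv hs).differentiableAt (hs.mem_nhds hx)).div (hdx i).self_of_nhds (hf i)
  refine (tendsto_deriv_logDeriv hs hx hfg (.of_forall fun t => by fun_prop) hg).congr fun t => ?_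
  rw [(hsum t).deriv_eq, deriv_fun_sum fun i _ => hlog i]

section GenusTwoProduct

/-- The Weierstrass elementary factor `E₂(w) = (1 - w) exp (w + w² / 2)` of genus two. -/
def genusTwoFactor (w : ℂ) : ℂ := (1 - w) * Complex.exp (w + w ^ 2 / 2)

/-- The canonical product of genus two with zeros at the nonzero points of the family `a`.
Since `z / 0 = 0`, indices `i` with `a i = 0` contribute the factor `1`. -/
def genusTwoProduct {ι : Type*} (a : ι → ℂ) (z : ℂ) : ℂ := ∏' i, genusTwoFactor (z / a i)

@[simp]
theorem genusTwoFactor_zero : genusTwoFactor 0 = 1 := by simp [genusTwoFactor]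

theorem genusTwoFactor_eq_zero_iff {w : ℂ} : genusTwoFactor w = 0 ↔ w = 1 := by
  rw [genusTwoFactor, mul_eq_zero, or_iff_left (Complex.exp_ne_zero _), sub_eq_zero, eq_comm]

theorem genusTwoFactor_div_eq_zero_iff {z c : ℂ} :
    genusTwoFactor (z / c) = 0 ↔ c ≠ 0 ∧ z = c := by
  rw [genusTwoFactor_eq_zero_iff]
  rcases eq_or_ne c 0 with rfl | hc
  · simp
  · simp [hc, div_eq_one_iff_eq]

theorem hasDerivAt_genusTwoFactor (w : ℂ) :
    HasDerivAt genusTwoFactor (-w ^ 2 * Complex.exp (w + w ^ 2 / 2)) w := by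
  have hexp : HasDerivAt (fun w : ℂ => w + w ^ 2 / 2) (1 + w) w :=
    ((hasDerivAt_id w).add ((hasDerivAt_pow 2 w).div_const 2)).congr_deriv (by simp)
  exact (((hasDerivAt_id w).const_sub 1).mul hexp.cexp).congr_deriv
    (by simp only [neg_mul, one_mul, id_eq]; ring)

@[fun_prop]
theorem differentiable_genusTwoFactor : Differentiable ℂ genusTwoFactor :=
  fun w => (hasDerivAt_genusTwoFactor w).differentiableAt

@[fun_prop]
theorem continuous_genusTwoFactor : Continuous genusTwoFactor :=
  differentiable_genusTwoFactor.continuous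

theorem norm_genusTwoFactor_sub_one_le {w : ℂ} (hw : ‖w‖ ≤ 1) :
    ‖genusTwoFactor w - 1‖ ≤ Real.exp 2 * ‖w‖ ^ 3 := by
  have hbound (v : ℂ) (hv : v ∈ Metric.closedBall (0 : ℂ) ‖w‖) :
      ‖-v ^ 2 * Complex.exp (v + v ^ 2 / 2)‖ ≤ ‖w‖ ^ 2 * Real.exp 2 := by
    have hvw : ‖v‖ ≤ ‖w‖ := by simpa using hv
    have hexponent : ‖v + v ^ 2 / 2‖ ≤ 2 := by
      refine (norm_add_le _ _).trans ?_
      rw [norm_div, norm_pow, Complex.norm_ofNat]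
      nlinarith [norm_nonneg v]
    rw [norm_mul, norm_neg, norm_pow]
    gcongr
    exact (Complex.norm_exp_le_exp_norm _).trans (Real.exp_le_exp.mpr hexponent)
  have hmvt := (convex_closedBall (0 : ℂ) ‖w‖).norm_image_sub_le_of_norm_hasDerivWithin_le
    (fun v _ => (hasDerivAt_genusTwoFactor v).hasDerivWithinAt) hbound
    (x := 0) (y := w) (by simp) (by simp)
  rw [genusTwoFactor_zero, sub_zero] at hmvt
  exact hmvt.trans_eq (by ring)

theorem deriv_logDeriv_genusTwoFactor_div {z c : ℂ} (hzc : z ≠ c) :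
    deriv (logDeriv fun z => genusTwoFactor (z / c)) z =
      -if c = 0 then 0 else 1 / (z - c) ^ 2 - 1 / c ^ 2 := by
  split_ifs with hc
  · simp [hc, logDeriv]
  have hlog : logDeriv (fun z => genusTwoFactor (z / c)) =ᶠ[𝓝 z]
      fun z => (z - c)⁻¹ + z / c ^ 2 + 1 / c := by
    filter_upwards [isOpen_ne.mem_nhds hzc] with w (hw : w ≠ c)
    have hfactor : HasDerivAt (fun z => genusTwoFactor (z / c))
        (-(w / c) ^ 2 * Complex.exp (w / c + (w / c) ^ 2 / 2) * (1 / c)) w :=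
      HasDerivAt.comp (h := fun z => z / c) w (hasDerivAt_genusTwoFactor (w / c))
        ((hasDerivAt_id' w).div_const c)
    have hwc : w - c ≠ 0 := sub_ne_zero.mpr hw
    have hcw : c - w ≠ 0 := sub_ne_zero.mpr hw.symm
    rw [logDeriv_apply, hfactor.deriv, genusTwoFactor, one_sub_div hc]
    field_simp
    ring
  have hderiv : HasDerivAt (fun z => (z - c)⁻¹ + z / c ^ 2 + 1 / c)
      (-1 / (z - c) ^ 2 + 1 / c ^ 2) z :=
    ((((hasDerivAt_id z).sub_const c).inv (sub_ne_zero.mpr hzc)).add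
      ((hasDerivAt_id z).div_const _)).add_const _
  rw [hlog.deriv_eq, hderiv.deriv]
  ring

variable {ι : Type*} {a : ι → ℂ}

theorem eventually_norm_genusTwoFactor_sub_one_le (ha : Summable fun i => ‖a i‖⁻¹ ^ 3) (R : ℝ) :
    ∀ᶠ i in cofinite, ∀ z ∈ Metric.closedBall (0 : ℂ) R,
      ‖genusTwoFactor (z / a i) - 1‖ ≤ Real.exp 2 * R ^ 3 * ‖a i‖⁻¹ ^ 3 := by
  filter_upwards [(ha.mul_left (R ^ 3)).tendsto_cofinite_zero.eventually_le_const one_pos]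
    with i hi z hz
  have hzR : ‖z / a i‖ ≤ R * ‖a i‖⁻¹ := by
    rw [norm_div, div_eq_mul_inv]
    gcongr
    simpa using hz
  have hcube : ‖z / a i‖ ^ 3 ≤ (R * ‖a i‖⁻¹) ^ 3 := by gcongr
  have hle : ‖z / a i‖ ≤ 1 := by
    rw [← pow_le_one_iff_of_nonneg (norm_nonneg _) three_ne_zero]
    exact hcube.trans (by rwa [mul_pow])
  calc ‖genusTwoFactor (z / a i) - 1‖ ≤ Real.exp 2 * ‖z / a i‖ ^ 3 :=
        norm_genusTwoFactor_sub_one_le hle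
    _ ≤ Real.exp 2 * (R * ‖a i‖⁻¹) ^ 3 := by gcongr
    _ = Real.exp 2 * R ^ 3 * ‖a i‖⁻¹ ^ 3 := by ring

theorem summable_norm_genusTwoFactor_sub_one (ha : Summable fun i => ‖a i‖⁻¹ ^ 3) (z : ℂ) :
    Summable fun i => ‖genusTwoFactor (z / a i) - 1‖ := by
  refine Summable.of_norm_bounded_eventually (ha.mul_left (Real.exp 2 * ‖z‖ ^ 3)) ?_
  filter_upwards [eventually_norm_genusTwoFactor_sub_one_le ha ‖z‖] with i hi
  simpa only [norm_norm] using hi z (by simp)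

theorem hasProdLocallyUniformlyOn_genusTwoProduct (ha : Summable fun i => ‖a i‖⁻¹ ^ 3) :
    HasProdLocallyUniformlyOn (fun i z => genusTwoFactor (z / a i)) (genusTwoProduct a) univ := by
  refine hasProdLocallyUniformlyOn_of_forall_compact isOpen_univ fun K _ hK => ?_
  obtain ⟨R, hR⟩ := hK.isBounded.subset_closedBall 0
  have h := Summable.hasProdUniformlyOn_one_add (f := fun i z => genusTwoFactor (z / a i) - 1) hK
    (ha.mul_left (Real.exp 2 * R ^ 3))
    ((eventually_norm_genusTwoFactor_sub_one_le ha R).mono fun i hi z hz => hi z (hR hz))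
    (fun i => Continuous.continuousOn (by fun_prop))
  simp only [add_sub_cancel] at h
  exact h

theorem differentiable_genusTwoProduct (ha : Summable fun i => ‖a i‖⁻¹ ^ 3) :
    Differentiable ℂ (genusTwoProduct a) := by
  rw [← differentiableOn_univ]
  exact TendstoLocallyUniformlyOn.differentiableOn (hasProdLocallyUniformlyOn_genusTwoProduct ha)
    (.of_forall fun t => by fun_prop) isOpen_univ

theorem genusTwoProduct_eq_zero_iff (ha : Summable fun i => ‖a i‖⁻¹ ^ 3) {z : ℂ} :
    genusTwoProduct a z = 0 ↔ ∃ i, a i ≠ 0 ∧ z = a i := by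
  simp only [← genusTwoFactor_div_eq_zero_iff]
  refine ⟨fun h => ?_, tprod_of_exists_eq_zero⟩
  by_contra! hne
  refine tprod_one_add_ne_zero_of_summable (f := fun i => genusTwoFactor (z / a i) - 1)
    (by simpa using hne) (summable_norm_genusTwoFactor_sub_one ha z) ?_
  simpa [genusTwoProduct] using h

theorem hasSum_deriv_logDeriv_genusTwoProduct (ha : Summable fun i => ‖a i‖⁻¹ ^ 3) {z : ℂ}
    (hz : ∀ i, z ≠ a i) :
    HasSum (fun i => if a i = 0 then 0 else 1 / (z - a i) ^ 2 - 1 / a i ^ 2)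
      (-deriv (logDeriv (genusTwoProduct a)) z) := by
  have hprod : genusTwoProduct a z ≠ 0 :=
    fun h => (genusTwoProduct_eq_zero_iff ha).mp h |>.elim fun i hi => hz i hi.2
  have hfactor (i : ι) : genusTwoFactor (z / a i) ≠ 0 :=
    fun h => hz i (genusTwoFactor_div_eq_zero_iff.mp h).2
  have h := (hasSum_deriv_logDeriv_of_hasProdLocallyUniformlyOn isOpen_univ (mem_univ z)
    (hasProdLocallyUniformlyOn_genusTwoProduct ha)
    (fun i => Differentiable.differentiableOn (by fun_prop)) hfactor hprod).neg
  simpa only [deriv_logDeriv_genusTwoFactor_div (hz _), neg_neg] using h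

end GenusTwoProduct

theorem eq_const_of_periodic_of_eventuallyEq_differentiableAt (P : PeriodPair) {f g : ℂ → ℂ}
    (hf : ∀ z ∉ P.lattice, DifferentiableAt ℂ f z) (hper : ∀ l ∈ P.lattice, f.Periodic l)
    (hg : DifferentiableAt ℂ g 0) (hfg : f =ᶠ[𝓝[≠] 0] g) :
    ∃ c, ∀ z ∉ P.lattice, f z = c := by
  classical
  set h : ℂ → ℂ := fun z => if z ∈ P.lattice then g 0 else f z with h_def
  have hhper (z l : ℂ) (hl : l ∈ P.lattice) : h (z + l) = h z := by
    simp only [h_def, Submodule.add_mem_iff_left _ hl, hper l hl z]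
  have hh0 : DifferentiableAt ℂ h 0 := by
    refine hg.congr_of_eventuallyEq ?_
    filter_upwards [P.compl_lattice_sdiff_singleton_mem_nhds 0,
      eventually_nhdsWithin_iff.mp hfg] with z hz hzfg
    rcases eq_or_ne z 0 with rfl | hz0
    · exact if_pos (zero_mem _)
    · exact (if_neg fun hzP => hz ⟨hzP, hz0⟩).trans (hzfg hz0)
  have hh : Differentiable ℂ h := by
    intro z
    by_cases hz : z ∈ P.lattice
    · have hshift : (fun w => h (w - z)) = h :=
        funext fun w => by rw [← hhper _ z hz, sub_add_cancel]
      rw [← hshift, differentiableAt_comp_sub_const, sub_self]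
      exact hh0
    · refine (hf z hz).congr_of_eventuallyEq ?_
      filter_upwards [P.isClosed_lattice.isOpen_compl.mem_nhds hz] with w hw using if_neg hw
  refine ⟨h 0, fun z hz => ?_⟩
  rw [← hh.apply_eq_apply_of_bounded
    (IsZLattice.isCompact_range_of_periodic P.lattice h hh.continuous hhper).isBounded z 0]
  exact (if_neg hz).symm

theorem two_le_analyticOrderAt_zero_of_even {F : ℂ → ℂ} (hF : AnalyticAt ℂ F 0)
    (heven : F.Even) (hF0 : F 0 = 0) : 2 ≤ analyticOrderAt F 0 := by
  refine (natCast_le_analyticOrderAt_iff_iteratedDeriv_eq_zero (n := 2) hF).mpr fun i hi => ?_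
  interval_cases i
  · rwa [iteratedDeriv_zero]
  · have h := deriv_comp_neg F 0
    rw [funext heven, neg_zero] at h
    rw [iteratedDeriv_one]
    exact self_eq_neg.mp h

theorem det_succ_eq_mul_det_schurComplement {K : Type*} [Field K] {n : ℕ}
    (M : Matrix (Fin (n + 1)) (Fin (n + 1)) K) (hM : M 0 0 ≠ 0) :
    M.det = M 0 0 *
      (Matrix.of fun i j : Fin n => M i.succ j.succ - M i.succ 0 / M 0 0 * M 0 j.succ).det := by
  let c : Fin (n + 1) → K := Fin.cons 0 fun i => M i.succ 0 / M 0 0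
  let B : Matrix (Fin (n + 1)) (Fin (n + 1)) K := Matrix.of fun i j => M i j - c i * M 0 j
  have hB₀ (j : Fin (n + 1)) : B 0 j = M 0 j := by simp [B, c]
  have hBsucc (i : Fin n) (j : Fin (n + 1)) :
      B i.succ j = M i.succ j - M i.succ 0 / M 0 0 * M 0 j := rfl
  have hcolumn (i : Fin n) : B i.succ 0 = 0 := by rw [hBsucc, div_mul_cancel₀ _ hM, sub_self]
  have hdet : M.det = B.det :=
    Matrix.det_eq_of_forall_row_eq_smul_add_const c 0 rfl fun i j => by
      rw [hB₀]; exact (sub_add_cancel _ _).symm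
  have hexpand : ∑ i : Fin n, (-1) ^ (i.succ : ℕ) * B i.succ 0 *
      (B.submatrix i.succ.succAbove Fin.succ).det = 0 :=
    Finset.sum_eq_zero fun i _ => by rw [hcolumn, mul_zero, zero_mul]
  rw [hdet, Matrix.det_succ_column_zero, Fin.sum_univ_succ, hexpand, Fin.val_zero, pow_zero,
    one_mul, add_zero, hB₀, Fin.succAbove_zero]
  rfl

namespace EllLattice

variable (L : EllLattice)

/-- The lattice with its two periods, as a `PeriodPair`: this makes Mathlib's theory of the
Weierstrass `℘`-function available. -/
def toPeriodPair : PeriodPair where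
  ω₁ := L.ω₁
  ω₂ := L.ω₂
  indep := LinearIndependent.pair_iff.mpr L.indep

/-- The set `Λ` of lattice points, as an additive group. -/
abbrev lattice : Submodule ℤ ℂ := L.toPeriodPair.lattice

theorem mem_iff_mem_lattice {z : ℂ} : L.mem z ↔ z ∈ L.lattice := by
  simp only [mem, PeriodPair.mem_lattice, zsmul_eq_mul, eq_comm (a := z), toPeriodPair]

theorem coe_latticeEquivProd_symm (p : ℤ × ℤ) :
    (L.toPeriodPair.latticeEquivProd.symm p : ℂ) = L.per p := by
  simp only [PeriodPair.latticeEquiv_symm_apply, per, zsmul_eq_mul]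
  rfl

theorem summable_norm_inv_lattice_pow_three : Summable fun l : L.lattice => ‖(l : ℂ)‖⁻¹ ^ 3 :=
  ZLattice.summable_norm_pow_inv L.lattice 3 (by simp)

theorem sigma_eq_mul_genusTwoProduct (z : ℂ) :
    L.sigma z = z * genusTwoProduct ((↑) : L.lattice → ℂ) z := by
  have hsupport : Function.mulSupport (fun p => genusTwoFactor (z / L.per p)) ⊆ {p | p ≠ 0} := by
    rintro _ hp rfl
    simp [per] at hp
  rw [genusTwoProduct, ← L.toPeriodPair.latticeEquivProd.symm.toEquiv.tprod_eq]
  simp only [LinearEquiv.coe_toEquiv, coe_latticeEquivProd_symm]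
  rw [← tprod_subtype_eq_of_mulSupport_subset hsupport, sigma]
  congr! 3
  rw [genusTwoFactor]
  ring_nf

@[fun_prop]
theorem differentiable_sigma : Differentiable ℂ L.sigma := by
  rw [funext L.sigma_eq_mul_genusTwoProduct]
  exact differentiable_id.mul (differentiable_genusTwoProduct L.summable_norm_inv_lattice_pow_three)

@[fun_prop]
theorem continuous_sigma : Continuous L.sigma := L.differentiable_sigma.continuous

theorem sigma_eq_zero_iff {z : ℂ} : L.sigma z = 0 ↔ z ∈ L.lattice := by
  rw [sigma_eq_mul_genusTwoProduct, mul_eq_zero,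
    genusTwoProduct_eq_zero_iff L.summable_norm_inv_lattice_pow_three]
  refine ⟨?_, fun hz => ?_⟩
  · rintro (rfl | ⟨l, -, rfl⟩)
    exacts [zero_mem _, l.2]
  · rcases eq_or_ne z 0 with hz0 | hz0
    exacts [.inl hz0, .inr ⟨⟨z, hz⟩, hz0, rfl⟩]

@[simp]
theorem sigma_zero : L.sigma 0 = 0 := L.sigma_eq_zero_iff.mpr (zero_mem _)

@[simp]
theorem sigma_neg (z : ℂ) : L.sigma (-z) = -L.sigma z := by
  rw [sigma_eq_mul_genusTwoProduct, sigma_eq_mul_genusTwoProduct, genusTwoProduct, genusTwoProduct,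
    ← (Equiv.neg L.lattice).tprod_eq]
  simp

theorem exists_sigma_ne_zero : ∃ z, L.sigma z ≠ 0 :=
  ⟨_, fun h => L.toPeriodPair.ω₁_div_two_notMem_lattice (L.sigma_eq_zero_iff.mp h)⟩

theorem sigma_ne_zero {z : ℂ} (hz : z ∉ L.lattice) : L.sigma z ≠ 0 :=
  mt L.sigma_eq_zero_iff.mp hz

theorem isOpen_compl_lattice : IsOpen (L.lattice : Set ℂ)ᶜ :=
  L.toPeriodPair.isClosed_lattice.isOpen_compl

theorem countable_lattice : (L.lattice : Set ℂ).Countable :=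
  countable_coe_iff.mp <| L.toPeriodPair.latticeEquivProd.toEquiv.countable_iff.mpr inferInstance

theorem isPreconnected_compl_lattice : IsPreconnected (L.lattice : Set ℂ)ᶜ :=
  (L.countable_lattice.isPathConnected_compl_of_one_lt_rank (by simp)).isConnected.isPreconnected

theorem differentiableAt_logDeriv_sigma {z : ℂ} (hz : z ∉ L.lattice) :
    DifferentiableAt ℂ (logDeriv L.sigma) z :=
  L.differentiable_sigma.deriv.differentiableAt.div L.differentiable_sigma.differentiableAt
    (L.sigma_ne_zero hz)

theorem deriv_logDeriv_sigma {z : ℂ} (hz : z ∉ L.lattice) :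
    deriv (logDeriv L.sigma) z = -L.toPeriodPair.weierstrassP z := by
  have hsummable := L.summable_norm_inv_lattice_pow_three
  set g := genusTwoProduct ((↑) : L.lattice → ℂ) with hg
  have hgd : Differentiable ℂ g := differentiable_genusTwoProduct hsummable
  have hne {w : ℂ} (hw : w ∉ L.lattice) : w ≠ 0 ∧ g w ≠ 0 := by
    rw [← mul_ne_zero_iff, hg, ← sigma_eq_mul_genusTwoProduct]
    exact L.sigma_ne_zero hw
  have hlog : logDeriv L.sigma =ᶠ[𝓝 z] fun w => w⁻¹ + logDeriv g w := by
    filter_upwards [L.isOpen_compl_lattice.mem_nhds hz] with w hw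
    rw [funext L.sigma_eq_mul_genusTwoProduct, ← hg, logDeriv_mul w (hne hw).1 (hne hw).2
      differentiableAt_fun_id hgd.differentiableAt, logDeriv_id', one_div]
  have hderiv : HasDerivAt (fun w => w⁻¹ + logDeriv g w)
      (-(z ^ 2)⁻¹ + deriv (logDeriv g) z) z :=
    (hasDerivAt_inv (hne hz).1).add
      (hgd.deriv.differentiableAt.div hgd.differentiableAt (hne hz).2).hasDerivAt
  have hsum : L.toPeriodPair.weierstrassPExcept 0 z = -deriv (logDeriv g) z :=
    (L.toPeriodPair.hasSum_weierstrassPExcept 0 z).unique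
      (hasSum_deriv_logDeriv_genusTwoProduct hsummable fun l h => hz (h ▸ l.2))
  have hP := L.toPeriodPair.weierstrassPExcept_add 0 z
  rw [Submodule.coe_zero, hsum] at hP
  rw [hlog.deriv_eq, hderiv.deriv, ← hP]
  ring

theorem exists_logDeriv_sigma_add (l : L.lattice) :
    ∃ α, ∀ z ∉ L.lattice, logDeriv L.sigma (z + l) = logDeriv L.sigma z + α := by
  have hl {z : ℂ} (hz : z ∉ L.lattice) : z + l ∉ L.lattice :=
    mt (Submodule.add_mem_iff_left _ l.2).mp hz
  refine L.isOpen_compl_lattice.exists_eq_add_of_deriv_eq L.isPreconnected_compl_lattice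
    (fun z hz => ?_) (fun z hz => ?_) fun z hz => ?_
  · exact (differentiableAt_comp_add_const.mpr
      (L.differentiableAt_logDeriv_sigma (hl hz))).differentiableWithinAt
  · exact (L.differentiableAt_logDeriv_sigma hz).differentiableWithinAt
  · rw [deriv_comp_add_const, L.deriv_logDeriv_sigma (hl hz), L.deriv_logDeriv_sigma hz,
      PeriodPair.weierstrassP_add_coe]

theorem exists_sigma_add (l : L.lattice) :
    ∃ k α, ∀ z, L.sigma (z + l) = k * Complex.exp (α * z) * L.sigma z := by
  have hl {z : ℂ} : z + l ∈ L.lattice ↔ z ∈ L.lattice := Submodule.add_mem_iff_left _ l.2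
  obtain ⟨α, hα⟩ := L.exists_logDeriv_sigma_add l
  have hlog : EqOn (logDeriv fun z => L.sigma (z + l))
      (logDeriv fun z => Complex.exp (α * z) * L.sigma z) (L.lattice : Set ℂ)ᶜ := by
    intro z hz
    rw [logDeriv_mul (f := fun z => Complex.exp (α * z)) z (Complex.exp_ne_zero _)
      (L.sigma_ne_zero hz) (by fun_prop) (by fun_prop)]
    have hshift : logDeriv (fun z => L.sigma (z + l)) z = logDeriv L.sigma (z + l) := by
      rw [logDeriv_apply, deriv_comp_add_const, logDeriv_apply]
    have hexp : logDeriv (fun z => Complex.exp (α * z)) z = α := by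
      have h := ((hasDerivAt_id' z).const_mul α).cexp.deriv
      rw [logDeriv_apply, h]
      field_simp [Complex.exp_ne_zero]
    rw [hshift, hα z hz, hexp, add_comm]
  obtain ⟨k, -, hk⟩ := (logDeriv_eqOn_iff (by fun_prop) (by fun_prop)
    L.isOpen_compl_lattice L.isPreconnected_compl_lattice
    (fun z hz => mul_ne_zero (Complex.exp_ne_zero _) (L.sigma_ne_zero hz))
    (fun z hz => L.sigma_ne_zero (mt hl.mp hz))).mp hlog
  refine ⟨k, α, fun z => ?_⟩
  by_cases hz : z ∈ L.lattice
  · rw [L.sigma_eq_zero_iff.mpr hz, L.sigma_eq_zero_iff.mpr (hl.mpr hz), mul_zero]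
  · simpa only [Pi.smul_apply, smul_eq_mul, mul_assoc] using hk hz

-- The quotient `F / σ²` is elliptic, and the evenness of `F` removes its double pole.
theorem exists_eq_const_mul_sigma_sq {F : ℂ → ℂ} (hF : Differentiable ℂ F) (heven : F.Even)
    (hF0 : F 0 = 0)
    (hper : ∀ l : L.lattice, ∀ z, F (z + l) * L.sigma z ^ 2 = F z * L.sigma (z + l) ^ 2) :
    ∃ c, ∀ z, F z = c * L.sigma z ^ 2 := by
  set s := genusTwoProduct ((↑) : L.lattice → ℂ) with hs
  have hsd : Differentiable ℂ s :=
    differentiable_genusTwoProduct L.summable_norm_inv_lattice_pow_three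
  have hs0 : s 0 ≠ 0 := by
    rw [hs, Ne, genusTwoProduct_eq_zero_iff L.summable_norm_inv_lattice_pow_three]
    rintro ⟨l, hl, hl0⟩
    exact hl hl0.symm
  obtain ⟨G, hG, hFG⟩ := (natCast_le_analyticOrderAt (hF.analyticAt 0)).mp
    (two_le_analyticOrderAt_zero_of_even (hF.analyticAt 0) heven hF0)
  have hdiff (z : ℂ) (hz : z ∉ L.lattice) :
      DifferentiableAt ℂ (fun z => F z / L.sigma z ^ 2) z :=
    hF.differentiableAt.div (L.differentiable_sigma.differentiableAt.pow 2)
      (pow_ne_zero 2 (L.sigma_ne_zero hz))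
  have hperiodic (l : ℂ) (hl : l ∈ L.lattice) :
      Function.Periodic (fun z => F z / L.sigma z ^ 2) l := fun z => by
    have hl' : z + l ∈ L.lattice ↔ z ∈ L.lattice := Submodule.add_mem_iff_left _ hl
    by_cases hz : z ∈ L.lattice
    · simp [L.sigma_eq_zero_iff.mpr hz, L.sigma_eq_zero_iff.mpr (hl'.mpr hz)]
    · exact (div_eq_div_iff (pow_ne_zero 2 (L.sigma_ne_zero (mt hl'.mp hz)))
        (pow_ne_zero 2 (L.sigma_ne_zero hz))).mpr (hper ⟨l, hl⟩ z)
  have hnear : (fun z => F z / L.sigma z ^ 2) =ᶠ[𝓝[≠] 0] fun z => G z / s z ^ 2 := by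
    filter_upwards [eventually_nhdsWithin_of_eventually_nhds hFG, self_mem_nhdsWithin]
      with z hz (hz0 : z ≠ 0)
    rw [hz, sub_zero, smul_eq_mul, L.sigma_eq_mul_genusTwoProduct, mul_pow,
      mul_div_mul_left _ _ (pow_ne_zero 2 hz0)]
  obtain ⟨c, hc⟩ := eq_const_of_periodic_of_eventuallyEq_differentiableAt L.toPeriodPair
    hdiff hperiodic (hG.differentiableAt.div (hsd.differentiableAt.pow 2) (pow_ne_zero 2 hs0)) hnear
  refine ⟨c, congrFun (hF.continuous.ext_on (L.countable_lattice.dense_compl ℝ)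
    (g := fun z => c * L.sigma z ^ 2) (by fun_prop) fun w hw => ?_)⟩
  exact (div_eq_iff (pow_ne_zero 2 (L.sigma_ne_zero hw))).mp (hc w hw)

/-- The product `σ(a + b) σ(a - b)`, which the addition theorems of `σ` relate at different
points. -/
def sigmaMul (a b : ℂ) : ℂ := L.sigma (a + b) * L.sigma (a - b)

theorem sigmaMul_swap (a b : ℂ) : L.sigmaMul b a = -L.sigmaMul a b := by
  rw [sigmaMul, sigmaMul, ← neg_sub a b, sigma_neg, add_comm]
  ring

theorem sigmaMul_self (a : ℂ) : L.sigmaMul a a = 0 := by simp [sigmaMul]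

theorem sigmaMul_zero_left (b : ℂ) : L.sigmaMul 0 b = -L.sigma b ^ 2 := by
  rw [sigmaMul, zero_add, zero_sub, sigma_neg]
  ring

theorem sigmaMul_neg_left (a b : ℂ) : L.sigmaMul (-a) b = L.sigmaMul a b := by
  rw [sigmaMul, sigmaMul, show -a + b = -(a - b) by ring, show -a - b = -(a + b) by ring, sigma_neg,
    sigma_neg]
  ring

theorem sigmaMul_add_mul_sigma_sq (l : L.lattice) (z b : ℂ) :
    L.sigmaMul (z + l) b * L.sigma z ^ 2 = L.sigmaMul z b * L.sigma (z + l) ^ 2 := by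
  obtain ⟨k, α, hσ⟩ := L.exists_sigma_add l
  have hexp : Complex.exp (α * (z + b)) * Complex.exp (α * (z - b)) = Complex.exp (α * z) ^ 2 := by
    rw [← Complex.exp_add, ← Complex.exp_nat_mul]
    ring_nf
  rw [sigmaMul, sigmaMul, add_right_comm, add_sub_right_comm, hσ, hσ, hσ]
  linear_combination
    k ^ 2 * L.sigma (z + b) * L.sigma (z - b) * L.sigma z ^ 2 * hexp

theorem sigmaMul_mul_sigma_sq_cyclic (a b : ℂ) {c : ℂ} (hc : L.sigma c ≠ 0) :
    L.sigmaMul a b * L.sigma c ^ 2 + L.sigmaMul b c * L.sigma a ^ 2 +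
      L.sigmaMul c a * L.sigma b ^ 2 = 0 := by
  obtain ⟨m, hm⟩ := L.exists_eq_const_mul_sigma_sq
    (F := fun z => L.sigmaMul z b * L.sigma c ^ 2 - L.sigmaMul z c * L.sigma b ^ 2)
    (by unfold sigmaMul; fun_prop) (fun z => by simp only [sigmaMul_neg_left])
    (by simp only [sigmaMul_zero_left]; ring) (fun l z => by
      linear_combination L.sigma c ^ 2 * L.sigmaMul_add_mul_sigma_sq l z b -
        L.sigma b ^ 2 * L.sigmaMul_add_mul_sigma_sq l z c)
  have hmc : m = L.sigmaMul c b := by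
    refine mul_right_cancel₀ (pow_ne_zero 2 hc) ?_
    rw [← hm c, sigmaMul_self]
    ring
  have ha := hm a
  rw [hmc, L.sigmaMul_swap b c] at ha
  rw [L.sigmaMul_swap a c]
  linear_combination ha

theorem sigmaMul_mul_sigmaMul_cyclic (a b c d : ℂ) :
    L.sigmaMul a b * L.sigmaMul c d + L.sigmaMul b c * L.sigmaMul a d +
      L.sigmaMul c a * L.sigmaMul b d = 0 := by
  obtain ⟨e, he⟩ := L.exists_sigma_ne_zero
  have hdecomp (a b : ℂ) : L.sigmaMul a b =
      (L.sigmaMul a e * L.sigma b ^ 2 - L.sigmaMul b e * L.sigma a ^ 2) / L.sigma e ^ 2 := by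
    rw [eq_div_iff (pow_ne_zero 2 he)]
    linear_combination L.sigmaMul_mul_sigma_sq_cyclic a b he -
      L.sigma b ^ 2 * L.sigmaMul_swap a e
  rw [hdecomp a b, hdecomp c d, hdecomp b c, hdecomp a d, hdecomp c a, hdecomp b d]
  ring

theorem sigma_fay (ξ x₁ x₂ y₁ y₂ : ℂ) :
    L.sigma (ξ + (x₁ + y₁)) * L.sigma (ξ + (x₂ + y₂)) *
        (L.sigma (x₁ + y₂) * L.sigma (x₂ + y₁)) -
      L.sigma (ξ + (x₁ + y₂)) * L.sigma (ξ + (x₂ + y₁)) *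
        (L.sigma (x₁ + y₁) * L.sigma (x₂ + y₂)) =
    L.sigma (ξ + (x₁ + y₁) + (x₂ + y₂)) * L.sigma ξ *
      (L.sigma (x₁ - x₂) * L.sigma (y₁ - y₂)) := by
  obtain ⟨s, hs⟩ : ∃ s, s = (x₁ + x₂ + y₁ + y₂) / 2 := ⟨_, rfl⟩
  obtain ⟨u, hu⟩ : ∃ u, u = (x₁ + y₁ - x₂ - y₂) / 2 := ⟨_, rfl⟩
  obtain ⟨v, hv⟩ : ∃ v, v = (x₁ + y₂ - x₂ - y₁) / 2 := ⟨_, rfl⟩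
  have h₁ : L.sigmaMul (ξ + s) u = L.sigma (ξ + (x₁ + y₁)) * L.sigma (ξ + (x₂ + y₂)) := by
    rw [sigmaMul, hs, hu]; ring_nf
  have h₂ : L.sigmaMul s v = L.sigma (x₁ + y₂) * L.sigma (x₂ + y₁) := by
    rw [sigmaMul, hs, hv]; ring_nf
  have h₃ : L.sigmaMul s u = L.sigma (x₁ + y₁) * L.sigma (x₂ + y₂) := by
    rw [sigmaMul, hs, hu]; ring_nf
  have h₄ : L.sigmaMul (ξ + s) v = L.sigma (ξ + (x₁ + y₂)) * L.sigma (ξ + (x₂ + y₁)) := by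
    rw [sigmaMul, hs, hv]; ring_nf
  have h₅ : L.sigmaMul (ξ + s) s = L.sigma (ξ + (x₁ + y₁) + (x₂ + y₂)) * L.sigma ξ := by
    rw [sigmaMul, hs]; ring_nf
  have h₆ : L.sigmaMul u v = L.sigma (x₁ - x₂) * L.sigma (y₁ - y₂) := by
    rw [sigmaMul, hu, hv]; ring_nf
  have h := L.sigmaMul_mul_sigmaMul_cyclic (ξ + s) u s v
  rw [L.sigmaMul_swap s u, L.sigmaMul_swap (ξ + s) s, h₁, h₂, h₃, h₄, h₅, h₆] at h
  linear_combination h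

theorem Phi_sub_div_mul_Phi {ξ x₀ x₁ y₀ y₁ : ℂ} (hξ : L.sigma ξ ≠ 0)
    (h₀₁ : L.sigma (x₀ + y₁) ≠ 0) (h₁₀ : L.sigma (x₁ + y₀) ≠ 0) (h₁₁ : L.sigma (x₁ + y₁) ≠ 0)
    (hξ' : L.sigma (ξ + (x₀ + y₀)) ≠ 0) :
    L.Phi ξ (x₁ + y₁) - L.Phi ξ (x₁ + y₀) / L.Phi ξ (x₀ + y₀) * L.Phi ξ (x₀ + y₁) =
      L.sigma (x₀ - x₁) / L.sigma (x₁ + y₀) *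
        (L.sigma (y₀ - y₁) / L.sigma (x₀ + y₁) * L.Phi (ξ + (x₀ + y₀)) (x₁ + y₁)) := by
  have hfay := L.sigma_fay ξ x₀ x₁ y₀ y₁
  unfold Phi
  field_simp
  linear_combination hfay

theorem det_Phi_succ {n : ℕ} {ξ : ℂ} {x y : Fin (n + 1) → ℂ} (hξ : L.sigma ξ ≠ 0)
    (hxy : ∀ i j, L.sigma (x i + y j) ≠ 0) (hξ' : L.sigma (ξ + (x 0 + y 0)) ≠ 0) :
    (Matrix.of fun i j => L.Phi ξ (x i + y j)).det =
      L.Phi ξ (x 0 + y 0) *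
        ((∏ i : Fin n, L.sigma (x 0 - x i.succ) / L.sigma (x i.succ + y 0)) *
          ((∏ j : Fin n, L.sigma (y 0 - y j.succ) / L.sigma (x 0 + y j.succ)) *
            (Matrix.of fun i j : Fin n =>
              L.Phi (ξ + (x 0 + y 0)) (x i.succ + y j.succ)).det)) := by
  have hpivot : L.Phi ξ (x 0 + y 0) ≠ 0 := div_ne_zero hξ' (mul_ne_zero hξ (hxy 0 0))
  rw [det_succ_eq_mul_det_schurComplement _ hpivot, ← Matrix.det_mul_row, ← Matrix.det_mul_column]
  congr 3
  ext i j
  exact L.Phi_sub_div_mul_Phi hξ (hxy _ _) (hxy _ _) (hxy _ _) hξ'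

/-- The right-hand side of the Frobenius determinant formula. -/
def frobeniusProd {n : ℕ} (ξ : ℂ) (x y : Fin n → ℂ) : ℂ :=
  (L.sigma (ξ + ∑ i, (x i + y i)) / L.sigma ξ) *
    (∏ i, ∏ j ∈ Finset.Ioi i, L.sigma (x i - x j) * L.sigma (y i - y j)) /
    ∏ i, ∏ j, L.sigma (x i + y j)

theorem frobeniusProd_succ {n : ℕ} {ξ : ℂ} (x y : Fin (n + 1) → ℂ)
    (hξ' : L.sigma (ξ + (x 0 + y 0)) ≠ 0) :
    L.frobeniusProd ξ x y =
      L.Phi ξ (x 0 + y 0) *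
        ((∏ i : Fin n, L.sigma (x 0 - x i.succ) / L.sigma (x i.succ + y 0)) *
          ((∏ j : Fin n, L.sigma (y 0 - y j.succ) / L.sigma (x 0 + y j.succ)) *
            L.frobeniusProd (ξ + (x 0 + y 0)) (fun i => x i.succ) fun j => y j.succ)) := by
  unfold frobeniusProd Phi
  simp only [Fin.prod_univ_succ, Fin.sum_univ_succ, Fin.prod_Ioi_zero, Fin.prod_Ioi_succ,
    Finset.prod_mul_distrib, Finset.prod_div_distrib, ← add_assoc] at hξ' ⊢
  field_simp

theorem continuousAt_det_Phi {n : ℕ} {ξ : ℂ} {x y : Fin n → ℂ} (hξ : L.sigma ξ ≠ 0)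
    (hxy : ∀ i j, L.sigma (x i + y j) ≠ 0) :
    ContinuousAt (fun t => (Matrix.of fun i j => L.Phi t (x i + y j)).det) ξ := by
  refine (Continuous.matrix_det continuous_id).continuousAt.comp
    (continuousAt_pi.mpr fun i => continuousAt_pi.mpr fun j => ?_)
  exact ContinuousAt.div (by fun_prop) (by fun_prop) (mul_ne_zero hξ (hxy i j))

theorem continuousAt_frobeniusProd {n : ℕ} {ξ : ℂ} (x y : Fin n → ℂ) (hξ : L.sigma ξ ≠ 0) :
    ContinuousAt (fun t => L.frobeniusProd t x y) ξ := by
  unfold frobeniusProd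
  exact ((ContinuousAt.div (by fun_prop) (by fun_prop) hξ).mul (by fun_prop)).div_const _

theorem eventually_sigma_add_ne_zero (c ξ : ℂ) : ∀ᶠ t in 𝓝[≠] ξ, L.sigma (t + c) ≠ 0 := by
  have hnhds : ∀ᶠ w in 𝓝 (ξ + c), w ∉ (L.lattice : Set ℂ) \ {ξ + c} :=
    L.toPeriodPair.compl_lattice_sdiff_singleton_mem_nhds (ξ + c)
  have htendsto : Tendsto (· + c) (𝓝 ξ) (𝓝 (ξ + c)) := (continuous_add_const c).tendsto ξ
  filter_upwards [eventually_nhdsWithin_of_eventually_nhds (htendsto.eventually hnhds),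
    self_mem_nhdsWithin] with t ht (htξ : t ≠ ξ)
  exact L.sigma_ne_zero fun hmem => ht ⟨hmem, fun h => htξ (add_right_cancel h)⟩

theorem det_Phi_eq_frobeniusProd {n : ℕ} {ξ : ℂ} {x y : Fin n → ℂ} (hξ : L.sigma ξ ≠ 0)
    (hxy : ∀ i j, L.sigma (x i + y j) ≠ 0) :
    (Matrix.of fun i j => L.Phi ξ (x i + y j)).det = L.frobeniusProd ξ x y := by
  induction n generalizing ξ with
  | zero => simp [frobeniusProd, hξ]
  | succ n ih =>
    -- The pivot `Φ_t(x₀ + y₀)` is nonzero for every `t ≠ ξ` near `ξ`; let `t → ξ`.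
    refine tendsto_nhds_unique_of_eventuallyEq
      ((L.continuousAt_det_Phi hξ hxy).tendsto.mono_left nhdsWithin_le_nhds)
      ((L.continuousAt_frobeniusProd x y hξ).tendsto.mono_left
        (nhdsWithin_le_nhds (s := {ξ}ᶜ))) ?_
    have hσ : ∀ᶠ t in 𝓝[≠] ξ, L.sigma t ≠ 0 := by
      simpa only [add_zero] using L.eventually_sigma_add_ne_zero 0 ξ
    filter_upwards [hσ, L.eventually_sigma_add_ne_zero (x 0 + y 0) ξ] with t ht ht'
    rw [L.det_Phi_succ ht hxy ht', L.frobeniusProd_succ x y ht',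
      ih ht' fun i j => hxy i.succ j.succ]

end EllLattice

theorem frobenius_elliptic_cauchy_det_general (L : EllLattice) (N : ℕ) (ξ : ℂ) (x y : Fin N → ℂ)
    (hξ : ¬ L.mem ξ) (hxy : ∀ i j, ¬ L.mem (x i + y j)) :
    Matrix.det (Matrix.of fun i j => L.Phi ξ (x i + y j)) =
      (L.sigma (ξ + ∑ i, (x i + y i)) / L.sigma ξ) *
        (∏ i, ∏ j ∈ Finset.Ioi i, L.sigma (x i - x j) * L.sigma (y i - y j)) /
        ∏ i, ∏ j, L.sigma (x i + y j) :=
  L.det_Phi_eq_frobeniusProd (L.sigma_ne_zero (mt L.mem_iff_mem_lattice.mpr hξ)) fun i j =>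
    L.sigma_ne_zero (mt L.mem_iff_mem_lattice.mpr (hxy i j))

/-- The Frobenius formula for the elliptic Cauchy determinant. -/
theorem frobenius_elliptic_cauchy_det (L : EllLattice) (N : ℕ) (hN : 1 ≤ N)
    (ξ : ℂ) (x y : Fin N → ℂ)
    (hξ : ¬ L.mem ξ) (hxy : ∀ i j, ¬ L.mem (x i + y j))
    (hsum : ¬ L.mem (ξ + ∑ i, (x i + y i))) :
    Matrix.det (Matrix.of fun i j => L.Phi ξ (x i + y j)) =
      (L.sigma (ξ + ∑ i, (x i + y i)) / L.sigma ξ) *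
        (∏ i, ∏ j ∈ Finset.Ioi i, L.sigma (x i - x j) * L.sigma (y i - y j)) /
        ∏ i, ∏ j, L.sigma (x i + y j) :=
  frobenius_elliptic_cauchy_det_general L N ξ x y hξ hxy
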